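/- Let X be a Hilbert space, A ⊆ B(X) a C*-subalgebra with strong operator closure M containing id_X. Then the unit ball of the standard Hilbert A-module H_A is dense in the unit ball of H_A•M in the strong topology 𝒯_s: for every ξ ∈ H_A•M with ‖ξ‖ ≤ 1 and every ε > 0 and finite V ⊆ X, there exists x ∈ H_A with ‖x‖ ≤ ‖ξ‖ and ‖⟨ξ − x, ξ − x⟩(v)‖ < ε for all v ∈ V. -/

import Mathlib

open scoped ComplexOrder
open Filter Topology

/-!
The argument is Kaplansky's, run in a ternary ring of operators `E ⊆ B(X, Y)`, that is, a space with
`a b† c ∈ E` for all `a, b, c ∈ E`. The map `κ(T) = 2T(1 + T†T)⁻¹` has the closed unit ball as its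
image, and both `κ` and a right inverse of it on the ball preserve norm-closed ternary rings. Since
`T ↦ T†` is not strongly continuous, `κ` is continuous merely from the strong-* to the strong
topology; this suffices, as a subspace has the same closure in both. So every `T` in the strong
closure of `E` is a strong limit of elements of `E` of norm at most `‖T‖`.

A sequence `ξ = (bₖ)` with `∑ bₖ†bₖ` convergent is a single operator `T : X → ℓ²(Y)` with
`⟨ξ, ξ⟩ = T†T`, and the finite columns with entries in a ternary ring again form a ternary ring.
-/

open ContinuousLinearMap
open scoped InnerProduct InnerProductSpace Pointwise

section StrongClosure

variable {𝕜 W X Y Z : Type*} [NormedField 𝕜]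
  [NormedAddCommGroup W] [NormedSpace 𝕜 W]
  [NormedAddCommGroup X] [NormedSpace 𝕜 X]
  [NormedAddCommGroup Y] [NormedSpace 𝕜 Y]
  [NormedAddCommGroup Z] [NormedSpace 𝕜 Z]

/-- The closure of a space of operators in the strong operator topology, encoded as the topology
induced by the product topology of `X → Y`. -/
def strongClosure (E : Submodule 𝕜 (X →L[𝕜] Y)) : Submodule 𝕜 (X →L[𝕜] Y) :=
  let coeFn := LinearMap.ltoFun 𝕜 X Y 𝕜 ∘ₗ ContinuousLinearMap.coeLM 𝕜
  (E.map coeFn).topologicalClosure.comap coeFn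

variable {E : Submodule 𝕜 (X →L[𝕜] Y)} {T : X →L[𝕜] Y}

theorem mem_strongClosure : T ∈ strongClosure E ↔ ⇑T ∈ closure ((⇑) '' (E : Set (X →L[𝕜] Y))) :=
  Iff.rfl

theorem exists_pos_forall_le_of_finite {α : Type*} {V : Set α} (hV : V.Finite) {δ : α → ℝ}
    (hδ : ∀ v ∈ V, 0 < δ v) : ∃ ε > 0, ∀ v ∈ V, ε ≤ δ v := by
  have hle : ∀ᶠ ε in 𝓝[>] (0 : ℝ), ∀ v ∈ V, ε ≤ δ v :=
    (eventually_all_finite hV).2 fun v hv => nhdsWithin_le_nhds (eventually_le_nhds (hδ v hv))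
  exact (eventually_mem_nhdsWithin.and hle).exists

theorem coe_mem_closure_image_coe_iff_forall_finset {s : Set (X →L[𝕜] Y)} :
    ⇑T ∈ closure ((⇑) '' s) ↔
      ∀ ε : ℝ, 0 < ε → ∀ V : Finset X, ∃ S ∈ s, ∀ v ∈ V, ‖T v - S v‖ < ε := by
  constructor
  · intro hT ε hε V
    have hU : IsOpen {f : X → Y | ∀ v ∈ V, ‖T v - f v‖ < ε} := by
      simp only [Set.ofPred_forall]
      exact isOpen_biInter_finset fun v _ => isOpen_lt (by fun_prop) continuous_const
    obtain ⟨_, hSU, S, hS, rfl⟩ := mem_closure_iff.1 hT _ hU fun v _ => by simpa using hε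
    exact ⟨S, hS, hSU⟩
  · intro h
    have hbasis := nhds_pi (a := ⇑T) ▸ hasBasis_pi fun v => Metric.nhds_basis_ball (x := T v)
    rw [mem_closure_iff_nhds_basis hbasis]
    rintro ⟨V, δ⟩ ⟨hV, hδ⟩
    obtain ⟨ε, hε, hεδ⟩ := exists_pos_forall_le_of_finite hV hδ
    obtain ⟨S, hS, hSV⟩ := h ε hε hV.toFinset
    refine ⟨S, ⟨S, hS, rfl⟩, fun v hv => ?_⟩
    rw [mem_ball_iff_norm']
    exact (hSV v (hV.mem_toFinset.2 hv)).trans_le (hεδ v hv)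

theorem mem_strongClosure_iff_forall_finset :
    T ∈ strongClosure E ↔
      ∀ ε : ℝ, 0 < ε → ∀ V : Finset X, ∃ S ∈ E, ∀ v ∈ V, ‖T v - S v‖ < ε :=
  coe_mem_closure_image_coe_iff_forall_finset

theorem le_strongClosure : E ≤ strongClosure E := fun _ hS =>
  mem_strongClosure.2 (subset_closure ⟨_, hS, rfl⟩)

theorem isClosed_strongClosure : IsClosed (strongClosure E : Set (X →L[𝕜] Y)) :=
  isClosed_closure.preimage continuous_coeFun

theorem mem_strongClosure_of_tendsto {α : Type*} {l : Filter α} [l.NeBot] {S : α → X →L[𝕜] Y}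
    (hS : ∀ a, S a ∈ strongClosure E) (hT : ∀ v, Tendsto (fun a => S a v) l (𝓝 (T v))) :
    T ∈ strongClosure E :=
  isClosed_closure.mem_of_tendsto (tendsto_pi_nhds.2 hT) (.of_forall hS)

theorem comp_comp_mem_strongClosure {F : Submodule 𝕜 (W →L[𝕜] Z)} (L : Y →L[𝕜] Z) (R : W →L[𝕜] X)
    (h : ∀ S ∈ E, L ∘L S ∘L R ∈ strongClosure F) (hT : T ∈ strongClosure E) :
    L ∘L T ∘L R ∈ strongClosure F := by
  have hcont : Continuous fun f : X → Y => L ∘ f ∘ R := by fun_prop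
  refine closure_minimal ?_ (isClosed_closure.preimage hcont) hT
  rintro _ ⟨S, hS, rfl⟩
  exact h S hS

theorem comp_mem_strongClosure {F : Submodule 𝕜 (X →L[𝕜] Z)} (L : Y →L[𝕜] Z)
    (hL : ∀ S ∈ E, L ∘L S ∈ strongClosure F) (hT : T ∈ strongClosure E) :
    L ∘L T ∈ strongClosure F :=
  comp_comp_mem_strongClosure L (.id 𝕜 X) hL hT

theorem mem_strongClosure_comp {F : Submodule 𝕜 (W →L[𝕜] Y)} (R : W →L[𝕜] X)
    (hR : ∀ S ∈ E, S ∘L R ∈ strongClosure F) (hT : T ∈ strongClosure E) :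
    T ∘L R ∈ strongClosure F :=
  comp_comp_mem_strongClosure (.id 𝕜 Y) R hR hT

end StrongClosure

theorem closure_mul_strongClosure_subset {𝕜 X : Type*} [NormedField 𝕜] [NormedAddCommGroup X]
    [NormedSpace 𝕜 X] (A : NonUnitalSubalgebra 𝕜 (X →L[𝕜] X)) :
    closure ((A : Set (X →L[𝕜] X)) * (strongClosure A.toSubmodule : Set (X →L[𝕜] X)))
      ⊆ strongClosure A.toSubmodule := by
  refine closure_minimal ?_ isClosed_strongClosure
  rintro _ ⟨a, ha, m, hm, rfl⟩
  exact comp_mem_strongClosure a (fun S hS => le_strongClosure (A.mul_mem ha hS)) hm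

section StrongStar

variable {X Y : Type*}
  [NormedAddCommGroup X] [InnerProductSpace ℂ X] [CompleteSpace X]
  [NormedAddCommGroup Y] [InnerProductSpace ℂ Y] [CompleteSpace Y]

/-- The values of an operator on `V` and of its adjoint on `W`, as a point of a Hilbert space.
The adjoint is conjugate-linear, so this map is only linear over the reals. -/
noncomputable def valuesAndAdjointValues (V : Finset X) (W : Finset Y) :
    (X →L[ℂ] Y) →ₗ[ℝ] WithLp 2 (PiLp 2 (fun _ : V => Y) × PiLp 2 (fun _ : W => X)) where
  toFun T := .toLp 2 (.toLp 2 fun v => T v, .toLp 2 fun w => (T†) w)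
  map_add' S T := WithLp.ofLp_injective 2 <| by ext <;> simp
  map_smul' c T := WithLp.ofLp_injective 2 <| by
    ext <;> simp [← Complex.coe_smul, map_smulₛₗ]

variable {E : Submodule ℂ (X →L[ℂ] Y)} {T : X →L[ℂ] Y}

theorem norm_apply_sub_le_norm_valuesAndAdjointValues_sub {V : Finset X} (W : Finset Y)
    (S T : X →L[ℂ] Y) {v : X} (hv : v ∈ V) :
    ‖T v - S v‖ ≤ ‖valuesAndAdjointValues V W T - valuesAndAdjointValues V W S‖ := by
  rw [← map_sub]
  exact (PiLp.norm_apply_le (valuesAndAdjointValues V W (T - S)).fst ⟨v, hv⟩).trans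
    (WithLp.norm_fst_le _ _)

theorem norm_adjoint_apply_sub_le_norm_valuesAndAdjointValues_sub (V : Finset X) {W : Finset Y}
    (S T : X →L[ℂ] Y) {w : Y} (hw : w ∈ W) :
    ‖(T†) w - (S†) w‖ ≤ ‖valuesAndAdjointValues V W T - valuesAndAdjointValues V W S‖ := by
  rw [← map_sub, ← sub_apply, ← map_sub]
  exact (PiLp.norm_apply_le (valuesAndAdjointValues V W (T - S)).snd ⟨w, hw⟩).trans
    (WithLp.norm_snd_le _ _)

-- `⟪z, T† w⟫ = ⟪T z, w⟫` makes every continuous functional of these values strongly continuous.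
theorem valuesAndAdjointValues_mem_closure (hT : T ∈ strongClosure E) (V : Finset X)
    (W : Finset Y) : valuesAndAdjointValues V W T ∈
      ((E.restrictScalars ℝ).map (valuesAndAdjointValues V W)).topologicalClosure := by
  let : InnerProductSpace ℝ X := .rclikeToReal ℂ X
  let : InnerProductSpace ℝ Y := .rclikeToReal ℂ Y
  rw [← Submodule.orthogonal_orthogonal_eq_closure, Submodule.mem_orthogonal]
  intro z hz
  let φ (f : X → Y) : ℝ :=
    ∑ v : V, inner ℝ (z.fst v) (f v) + ∑ w : W, inner ℝ (f (z.snd w)) (w : Y)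
  have hφ (S : X →L[ℂ] Y) : inner ℝ z (valuesAndAdjointValues V W S) = φ S := by
    have hadj (x : X) (y : Y) : inner ℝ x ((S†) y) = inner ℝ (S x) y :=
      congrArg Complex.re (adjoint_inner_right S x y)
    simp only [WithLp.prod_inner_apply, PiLp.inner_apply, φ, ← hadj]
    rfl
  have hφ_cont : Continuous φ := by fun_prop
  have hφ_zero : Set.EqOn φ 0 ((⇑) '' (E : Set (X →L[ℂ] Y))) := by
    rintro _ ⟨S, hS, rfl⟩
    rw [← hφ]
    exact (Submodule.mem_orthogonal' _ _).1 hz _ (Submodule.mem_map_of_mem hS)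
  rw [hφ]
  exact hφ_zero.closure hφ_cont continuous_const hT

theorem exists_norm_sub_lt_and_norm_adjoint_sub_lt (hT : T ∈ strongClosure E)
    {ε : ℝ} (hε : 0 < ε) (V : Finset X) (W : Finset Y) :
    ∃ S ∈ E, (∀ v ∈ V, ‖T v - S v‖ < ε) ∧ ∀ w ∈ W, ‖(T†) w - (S†) w‖ < ε := by
  have hmem := valuesAndAdjointValues_mem_closure hT V W
  obtain ⟨_, ⟨S, hS, rfl⟩, hTS⟩ := Metric.mem_closure_iff.1 hmem ε hε
  rw [dist_eq_norm] at hTS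
  exact ⟨S, hS,
    fun v hv => (norm_apply_sub_le_norm_valuesAndAdjointValues_sub W S T hv).trans_lt hTS,
    fun w hw => (norm_adjoint_apply_sub_le_norm_valuesAndAdjointValues_sub V S T hw).trans_lt hTS⟩

theorem adjoint_mem_strongClosure_map (hT : T ∈ strongClosure E) :
    T† ∈ strongClosure (E.map (adjoint (𝕜 := ℂ) (E := X) (F := Y)).toLinearEquiv.toLinearMap) := by
  rw [mem_strongClosure_iff_forall_finset]
  intro ε hε W
  obtain ⟨S, hS, -, hSW⟩ := exists_norm_sub_lt_and_norm_adjoint_sub_lt hT hε ∅ W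
  exact ⟨S†, Submodule.mem_map_of_mem hS, hSW⟩

end StrongStar

section KaplanskyMap

variable {X Y : Type*}
  [NormedAddCommGroup X] [InnerProductSpace ℂ X] [CompleteSpace X]
  [NormedAddCommGroup Y] [InnerProductSpace ℂ Y] [CompleteSpace Y]

theorem adjoint_comp_self_nonneg (T : X →L[ℂ] Y) : 0 ≤ T† ∘L T := by
  rw [nonneg_iff_isPositive]
  exact isPositive_adjoint_comp_self T

theorem isSelfAdjoint_adjoint_comp_self (T : X →L[ℂ] Y) : IsSelfAdjoint (T† ∘L T) :=
  (isPositive_adjoint_comp_self T).isSelfAdjoint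

theorem spectrum_adjoint_comp_self_nonneg (T : X →L[ℂ] Y) {t : ℝ}
    (ht : t ∈ spectrum ℝ (T† ∘L T)) : 0 ≤ t :=
  spectrum_nonneg_of_nonneg (adjoint_comp_self_nonneg T) ht

theorem spectrum_adjoint_comp_self_le_one {T : X →L[ℂ] Y} (hT : ‖T‖ ≤ 1) {t : ℝ}
    (ht : t ∈ spectrum ℝ (T† ∘L T)) : t ≤ 1 := by
  have hle : T† ∘L T ≤ algebraMap ℝ (X →L[ℂ] X) 1 := by
    rw [map_one, ← CStarAlgebra.norm_le_one_iff_of_nonneg _ (adjoint_comp_self_nonneg T),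
      norm_adjoint_comp_self]
    exact mul_le_one₀ hT (norm_nonneg T) hT
  exact (le_algebraMap_iff_spectrum_le (ha := isSelfAdjoint_adjoint_comp_self T)).1 hle t ht

/-- The operator `(1 + T†T)⁻¹`. -/
noncomputable def gramResolvent (T : X →L[ℂ] Y) : X →L[ℂ] X :=
  cfc (fun t : ℝ => (1 + t)⁻¹) (T† ∘L T)

theorem one_add_adjoint_comp_self_mul_gramResolvent (T : X →L[ℂ] Y) :
    (1 + T† ∘L T) * gramResolvent T = 1 := by
  have hsa := isSelfAdjoint_adjoint_comp_self T
  have hne : ∀ t ∈ spectrum ℝ (T† ∘L T), 1 + t ≠ 0 := fun t ht => by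
    linarith [spectrum_adjoint_comp_self_nonneg T ht]
  have hadd : 1 + T† ∘L T = cfc (fun t : ℝ => 1 + t) (T† ∘L T) := by
    rw [cfc_const_add (1 : ℝ) (fun t => t) _, cfc_id' ℝ _, map_one]
  have hinv : ContinuousOn (fun t : ℝ => (1 + t)⁻¹) (spectrum ℝ (T† ∘L T)) :=
    ContinuousOn.inv₀ (by fun_prop) hne
  rw [hadd, gramResolvent, ← cfc_mul _ _ _ (by fun_prop) hinv, ← cfc_one ℝ (T† ∘L T)]
  exact cfc_congr fun t ht => mul_inv_cancel₀ (hne t ht)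

theorem gramResolvent_apply_add (T : X →L[ℂ] Y) (v : X) :
    gramResolvent T v + (T†) (T (gramResolvent T v)) = v := by
  simpa using congr($(one_add_adjoint_comp_self_mul_gramResolvent T) v)

/-- Kaplansky's map `T ↦ 2T(1 + T†T)⁻¹`, which sends all operators onto the closed unit ball. -/
noncomputable def kaplanskyMap (T : X →L[ℂ] Y) : X →L[ℂ] Y :=
  (2 : ℂ) • T ∘L gramResolvent T

-- Pairing the equation with `w` gives `‖w‖² + ‖S w‖² = re ⟪w, q⟫ + re ⟪S w, e⟫`.
theorem two_mul_norm_apply_le (S : X →L[ℂ] Y) {w q : X} {e : Y}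
    (h : w + (S†) (S w) = q + (S†) e) : 2 * ‖S w‖ ≤ ‖q‖ + 2 * ‖e‖ := by
  have henergy : ‖w‖ ^ 2 + ‖S w‖ ^ 2 = RCLike.re ⟪w, q⟫_ℂ + RCLike.re ⟪S w, e⟫_ℂ := by
    simpa only [inner_add_right, adjoint_inner_right, map_add, inner_self_eq_norm_sq]
      using congr(RCLike.re ⟪w, $h⟫_ℂ)
  have hwq := re_inner_le_norm (𝕜 := ℂ) w q
  have hSe := re_inner_le_norm (𝕜 := ℂ) (S w) e
  by_contra! hlt
  nlinarith [sq_nonneg (2 * ‖w‖ - ‖q‖), norm_nonneg q, norm_nonneg e]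

theorem norm_kaplanskyMap_le_one (T : X →L[ℂ] Y) : ‖kaplanskyMap T‖ ≤ 1 := by
  refine opNorm_le_bound _ zero_le_one fun v => ?_
  have hv := two_mul_norm_apply_le T (w := gramResolvent T v) (q := v) (e := 0)
    (by rw [map_zero, add_zero, gramResolvent_apply_add])
  simpa [kaplanskyMap, norm_smul] using hv

theorem norm_kaplanskyMap_apply_sub_le (S T : X →L[ℂ] Y) (v : X) :
    ‖kaplanskyMap T v - kaplanskyMap S v‖ ≤
      ‖(T†) (T (gramResolvent T v)) - (S†) (T (gramResolvent T v))‖ +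
        4 * ‖T (gramResolvent T v) - S (gramResolvent T v)‖ := by
  set u := gramResolvent T v
  set w := gramResolvent S v - u with hw
  have hresolvent : w + (S†) (S w) = ((T†) (T u) - (S†) (T u)) + (S†) (T u - S u) := by
    have hS : gramResolvent S v + (S†) (S (gramResolvent S v)) = u + (T†) (T u) :=
      (gramResolvent_apply_add S v).trans (gramResolvent_apply_add T v).symm
    simp only [hw, map_sub]
    linear_combination (norm := module) hS
  have hsub : kaplanskyMap T v - kaplanskyMap S v = (2 : ℂ) • ((T u - S u) - S w) := by
    simp only [kaplanskyMap, hw, smul_apply, comp_apply, map_sub, u]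
    module
  have hSw := two_mul_norm_apply_le S hresolvent
  calc ‖kaplanskyMap T v - kaplanskyMap S v‖
      = 2 * ‖(T u - S u) - S w‖ := by rw [hsub, norm_smul, Complex.norm_two]
    _ ≤ 2 * (‖T u - S u‖ + ‖S w‖) := by gcongr; exact norm_sub_le _ _
    _ ≤ ‖(T†) (T u) - (S†) (T u)‖ + 4 * ‖T u - S u‖ := by linarith

/-- A right inverse of `kaplanskyMap` on the unit ball. The scalar equation `2r / (1 + r²) = s` has
the root `r = s / (1 + √(1 - s²))`, which here becomes `T (1 + √(1 - T†T))⁻¹`. -/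
noncomputable def kaplanskyPreimage (T : X →L[ℂ] Y) : X →L[ℂ] Y :=
  T ∘L cfc (fun t : ℝ => (1 + √(1 - t))⁻¹) (T† ∘L T)

theorem one_add_adjoint_comp_self_kaplanskyPreimage {T : X →L[ℂ] Y} (hT : ‖T‖ ≤ 1) :
    1 + (kaplanskyPreimage T)† ∘L kaplanskyPreimage T =
      (2 : ℂ) • cfc (fun t : ℝ => (1 + √(1 - t))⁻¹) (T† ∘L T) := by
  have hsa := isSelfAdjoint_adjoint_comp_self T
  set s := T† ∘L T with hs
  let φ (t : ℝ) : ℝ := (1 + √(1 - t))⁻¹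
  have hφ : ContinuousOn φ (spectrum ℝ s) :=
    ContinuousOn.inv₀ (by fun_prop) fun t _ => by positivity
  have hgram : (kaplanskyPreimage T)† ∘L kaplanskyPreimage T = cfc φ s * s * cfc φ s := by
    have hφ_adj : (cfc φ s)† = cfc φ s := (cfc_predicate (p := IsSelfAdjoint) φ s).star_eq
    rw [kaplanskyPreimage, adjoint_comp, ← hs, hφ_adj]
    rfl
  have hcfc : cfc φ s * s * cfc φ s = cfc (fun t => φ t * t * φ t) s := by
    rw [cfc_mul (fun t => φ t * t) φ s (by fun_prop) hφ, cfc_mul φ (fun t => t) s hφ (by fun_prop),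
      cfc_id' ℝ s]
  have htwo : (2 : ℂ) • cfc φ s = cfc (fun t => 2 * φ t) s := by
    rw [cfc_const_mul (2 : ℝ) φ s hφ, ← Complex.coe_smul, Complex.ofReal_ofNat]
  rw [hgram, hcfc, htwo, ← map_one (algebraMap ℝ (X →L[ℂ] X)),
    ← cfc_const_add (1 : ℝ) (fun t => φ t * t * φ t) s (by fun_prop)]
  refine cfc_congr fun t ht => ?_
  have hsqrt : √(1 - t) ^ 2 = 1 - t :=
    Real.sq_sqrt (by linarith [spectrum_adjoint_comp_self_le_one hT ht])
  simp only [φ]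
  field_simp
  linarith

theorem kaplanskyMap_kaplanskyPreimage {T : X →L[ℂ] Y} (hT : ‖T‖ ≤ 1) :
    kaplanskyMap (kaplanskyPreimage T) = T := by
  have h := one_add_adjoint_comp_self_mul_gramResolvent (kaplanskyPreimage T)
  rw [one_add_adjoint_comp_self_kaplanskyPreimage hT] at h
  ext v
  simpa [kaplanskyMap, kaplanskyPreimage] using congr(T ($h v))

end KaplanskyMap

section RightMultipliers

variable {X Y : Type*} [NormedAddCommGroup X] [InnerProductSpace ℂ X] [CompleteSpace X]
  [NormedAddCommGroup Y] [NormedSpace ℂ Y] {F : Submodule ℂ (X →L[ℂ] Y)}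

/-- The operators `x` such that right composition with `x` and with `x†` preserves `F`. -/
def rightMultipliers (F : Submodule ℂ (X →L[ℂ] Y)) : StarSubalgebra ℂ (X →L[ℂ] X) where
  carrier := {x | ∀ S ∈ F, S ∘L x ∈ F ∧ S ∘L x† ∈ F}
  mul_mem' {x y} hx hy S hS := by
    refine ⟨(hy _ (hx S hS).1).1, ?_⟩
    rw [mul_def, adjoint_comp]
    exact (hx _ (hy S hS).2).2
  add_mem' {x y} hx hy S hS := by
    rw [map_add, comp_add, comp_add]
    exact ⟨F.add_mem (hx S hS).1 (hy S hS).1, F.add_mem (hx S hS).2 (hy S hS).2⟩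
  algebraMap_mem' r S hS := by
    rw [Algebra.algebraMap_eq_smul_one, map_smulₛₗ, comp_smul, comp_smul, ← star_eq_adjoint,
      star_one]
    exact ⟨F.smul_mem _ hS, F.smul_mem _ hS⟩
  star_mem' {x} hx S hS := by
    rw [star_eq_adjoint, adjoint_adjoint]
    exact (hx S hS).symm

theorem isClosed_rightMultipliers (hF : IsClosed (F : Set (X →L[ℂ] Y))) :
    IsClosed (rightMultipliers F : Set (X →L[ℂ] X)) := by
  have heq : (rightMultipliers F : Set (X →L[ℂ] X)) =
      ⋂ S ∈ F, {x | S ∘L x ∈ F} ∩ {x | S ∘L x† ∈ F} := by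
    ext x
    simp [rightMultipliers]
  rw [heq]
  refine isClosed_biInter fun S _ => .inter ?_ ?_
  · exact hF.preimage (by fun_prop)
  · exact hF.preimage (by fun_prop)

theorem comp_cfc_mem (hF : IsClosed (F : Set (X →L[ℂ] Y))) {s : X →L[ℂ] X}
    (hs : IsSelfAdjoint s) (hFs : ∀ S ∈ F, S ∘L s ∈ F) (f : ℝ → ℝ) {S : X →L[ℂ] Y}
    (hS : S ∈ F) : S ∘L cfc f s ∈ F := by
  have hs_mem : s ∈ rightMultipliers F := fun S hS => by
    rw [← star_eq_adjoint, hs.star_eq]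
    exact ⟨hFs S hS, hFs S hS⟩
  have : IsClosed (rightMultipliers F : Set (X →L[ℂ] X)) := isClosed_rightMultipliers hF
  exact (cfc_mem (𝕜' := ℂ) f hs_mem S hS).1

end RightMultipliers

section TernaryRing

variable {X Y : Type*}
  [NormedAddCommGroup X] [InnerProductSpace ℂ X] [CompleteSpace X]
  [NormedAddCommGroup Y] [InnerProductSpace ℂ Y] [CompleteSpace Y]

/-- A ternary ring of operators: a space of operators `X → Y` closed under `(a, b, c) ↦ a b† c`. -/
def IsTernaryRing (E : Submodule ℂ (X →L[ℂ] Y)) : Prop :=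
  ∀ a ∈ E, ∀ b ∈ E, ∀ c ∈ E, a ∘L b† ∘L c ∈ E

variable {E : Submodule ℂ (X →L[ℂ] Y)} {T : X →L[ℂ] Y}

-- Composition is only separately strongly continuous, so one factor is extended at a time.
theorem isTernaryRing_strongClosure (hE : IsTernaryRing E) : IsTernaryRing (strongClosure E) := by
  have hright : ∀ a ∈ E, ∀ b ∈ E, ∀ c ∈ strongClosure E, a ∘L b† ∘L c ∈ strongClosure E :=
    fun a ha b hb c => comp_mem_strongClosure (a ∘L b†)
      fun S hS => le_strongClosure (hE a ha b hb S hS)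
  have hmiddle : ∀ a ∈ E, ∀ b ∈ strongClosure E, ∀ c ∈ strongClosure E,
      a ∘L b† ∘L c ∈ strongClosure E := by
    intro a ha b hb c hc
    refine comp_comp_mem_strongClosure a c ?_ (adjoint_mem_strongClosure_map hb)
    rintro _ ⟨S, hS, rfl⟩
    exact hright a ha S hS c hc
  exact fun a ha b hb c hc => mem_strongClosure_comp (b† ∘L c)
    (fun S hS => hmiddle S hS b hb c hc) ha

theorem IsTernaryRing.comp_cfc_mem_topologicalClosure (hE : IsTernaryRing E) {S : X →L[ℂ] Y}
    (hS : S ∈ E) (f : ℝ → ℝ) : S ∘L cfc f (S† ∘L S) ∈ E.topologicalClosure := by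
  refine comp_cfc_mem E.isClosed_topologicalClosure (isSelfAdjoint_adjoint_comp_self S) ?_ f
    (E.le_topologicalClosure hS)
  have hmaps : Set.MapsTo (fun R : X →L[ℂ] Y => R ∘L S† ∘L S) E E :=
    fun R hR => hE R hR S hS S hS
  exact fun R hR => hmaps.closure (by fun_prop) hR

theorem IsTernaryRing.kaplanskyMap_mem_topologicalClosure (hE : IsTernaryRing E)
    (hT : T ∈ E) : kaplanskyMap T ∈ E.topologicalClosure :=
  Submodule.smul_mem _ _ (hE.comp_cfc_mem_topologicalClosure hT _)

theorem IsTernaryRing.kaplanskyPreimage_mem_strongClosure (hE : IsTernaryRing E)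
    (hT : T ∈ strongClosure E) : kaplanskyPreimage T ∈ strongClosure E :=
  comp_cfc_mem isClosed_strongClosure (isSelfAdjoint_adjoint_comp_self T)
    (fun R hR => isTernaryRing_strongClosure hE R hR T hT T hT) _ hT

end TernaryRing

theorem topologicalClosure_inter_closedBall_subset {𝕜 G : Type*} [RCLike 𝕜]
    [NormedAddCommGroup G] [NormedSpace 𝕜 G] (E : Submodule 𝕜 G) (r : ℝ) :
    (E.topologicalClosure : Set G) ∩ Metric.closedBall 0 r ⊆
      closure (E ∩ Metric.closedBall 0 r : Set G) := by
  rintro x ⟨hx, hxr⟩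
  rw [mem_closedBall_zero_iff] at hxr
  rcases eq_or_ne x 0 with rfl | hx0
  · exact subset_closure ⟨E.zero_mem, by simpa using hxr⟩
  let f (e : G) : G := ((‖x‖ / ‖e‖ : ℝ) : 𝕜) • e
  have hfx : f x = x := by simp [f, hx0]
  have hf : ContinuousAt f x := by
    have : ‖x‖ ≠ 0 := norm_ne_zero_iff.2 hx0
    fun_prop (disch := assumption)
  rw [← hfx]
  refine hf.continuousWithinAt.mem_closure hx fun e he => ⟨E.smul_mem _ he, ?_⟩
  have hle : ‖x‖ / ‖e‖ * ‖e‖ ≤ ‖x‖ := mul_le_of_le_div₀ (norm_nonneg x) (norm_nonneg e) le_rfl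
  simpa [f, norm_smul] using hle.trans hxr

section KaplanskyDensity

variable {X Y : Type*}
  [NormedAddCommGroup X] [InnerProductSpace ℂ X] [CompleteSpace X]
  [NormedAddCommGroup Y] [InnerProductSpace ℂ Y] [CompleteSpace Y]
  {E : Submodule ℂ (X →L[ℂ] Y)} {T : X →L[ℂ] Y}

theorem kaplanskyMap_mem_closure_image (hT : T ∈ strongClosure E) :
    ⇑(kaplanskyMap T) ∈ closure ((⇑) '' (kaplanskyMap '' (E : Set (X →L[ℂ] Y)))) := by
  classical
  rw [coe_mem_closure_image_coe_iff_forall_finset]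
  intro ε hε V
  obtain ⟨S, hS, hSV, hSV_adj⟩ := exists_norm_sub_lt_and_norm_adjoint_sub_lt hT
    (show 0 < ε / 5 by positivity) (V.image (gramResolvent T)) (V.image (T ∘L gramResolvent T))
  refine ⟨_, ⟨S, hS, rfl⟩, fun v hv => ?_⟩
  have hu := hSV _ (Finset.mem_image_of_mem _ hv)
  have hTu := hSV_adj _ (Finset.mem_image_of_mem _ hv)
  rw [comp_apply] at hTu
  linarith [norm_kaplanskyMap_apply_sub_le S T v]

theorem IsTernaryRing.coe_mem_closure_image_closedBall_one (hE : IsTernaryRing E)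
    (hT : T ∈ strongClosure E) (hT1 : ‖T‖ ≤ 1) :
    ⇑T ∈ closure ((⇑) '' (E ∩ Metric.closedBall 0 1 : Set (X →L[ℂ] Y))) := by
  have hsub : kaplanskyMap '' (E : Set (X →L[ℂ] Y)) ⊆
      closure (E ∩ Metric.closedBall 0 1 : Set (X →L[ℂ] Y)) := by
    rintro _ ⟨S, hS, rfl⟩
    exact topologicalClosure_inter_closedBall_subset E 1
      ⟨hE.kaplanskyMap_mem_topologicalClosure hS,
        mem_closedBall_zero_iff.2 (norm_kaplanskyMap_le_one S)⟩
  rw [← kaplanskyMap_kaplanskyPreimage hT1]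
  refine closure_minimal ?_ isClosed_closure
    (kaplanskyMap_mem_closure_image (hE.kaplanskyPreimage_mem_strongClosure hT))
  exact (Set.image_mono hsub).trans (image_closure_subset_closure_image continuous_coeFun)

theorem IsTernaryRing.coe_mem_closure_image_closedBall_norm (hE : IsTernaryRing E)
    (hT : T ∈ strongClosure E) :
    ⇑T ∈ closure ((⇑) '' (E ∩ Metric.closedBall 0 ‖T‖ : Set (X →L[ℂ] Y))) := by
  rcases eq_or_ne T 0 with rfl | hT0
  · exact subset_closure ⟨0, ⟨E.zero_mem, by simp⟩, rfl⟩
  set c := (‖T‖ : ℂ) with hc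
  have hc0 : c ≠ 0 := by simpa [hc] using hT0
  have hunit := hE.coe_mem_closure_image_closedBall_one
    (Submodule.smul_mem _ c⁻¹ hT) (by simp [hc, norm_smul, hT0])
  have hscale : Set.MapsTo (fun f : X → Y => c • f)
      ((⇑) '' (E ∩ Metric.closedBall 0 1 : Set (X →L[ℂ] Y)))
      ((⇑) '' (E ∩ Metric.closedBall 0 ‖T‖ : Set (X →L[ℂ] Y))) := by
    rintro _ ⟨S, ⟨hS, hS1⟩, rfl⟩
    rw [mem_closedBall_zero_iff] at hS1
    refine ⟨c • S, ⟨E.smul_mem c hS, ?_⟩, rfl⟩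
    simpa [hc, norm_smul] using mul_le_of_le_one_right (norm_nonneg T) hS1
  simpa [smul_inv_smul₀ hc0] using hscale.closure (by fun_prop) hunit

end KaplanskyDensity

section Columns

variable {𝕜 ι X Y : Type*} [NormedField 𝕜]
  [NormedAddCommGroup X] [NormedSpace 𝕜 X]
  [NormedAddCommGroup Y] [NormedSpace 𝕜 Y]

/-- The `i`-th entry of an operator into an `ℓ²`-sum, regarded as a column of operators. -/
noncomputable def columnEntry (T : X →L[𝕜] lp (fun _ : ι => Y) 2) (i : ι) : X →L[𝕜] Y :=
  lp.evalCLM 𝕜 (fun _ : ι => Y) 2 i ∘L T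

theorem columnEntry_apply (T : X →L[𝕜] lp (fun _ : ι => Y) 2) (i : ι) (v : X) :
    columnEntry T i v = T v i :=
  rfl

theorem columnEntry_single_comp [DecidableEq ι] (i : ι) (S : X →L[𝕜] Y) :
    columnEntry (lp.singleContinuousLinearMap 𝕜 (fun _ : ι => Y) 2 i ∘L S) = Pi.single i S := by
  ext j v
  rcases eq_or_ne j i with rfl | hj
  · simp [columnEntry_apply]
  · simp [columnEntry_apply, hj]

/-- The columns with finitely many nonzero entries, all of them in `E`. -/
def finiteColumns (ι : Type*) (E : Submodule 𝕜 (X →L[𝕜] Y)) :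
    Submodule 𝕜 (X →L[𝕜] lp (fun _ : ι => Y) 2) where
  carrier := {T | (∀ i, columnEntry T i ∈ E) ∧ (Function.support (columnEntry T)).Finite}
  zero_mem' := by
    have hzero : columnEntry (0 : X →L[𝕜] lp (fun _ : ι => Y) 2) = 0 := by
      ext; rfl
    rw [Set.mem_ofPred_eq, hzero]
    exact ⟨fun _ => E.zero_mem, by simp⟩
  add_mem' {S T} hS hT := by
    have hadd : columnEntry (S + T) = columnEntry S + columnEntry T := rfl
    rw [Set.mem_ofPred_eq, hadd]
    exact ⟨fun i => E.add_mem (hS.1 i) (hT.1 i),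
      (hS.2.union hT.2).subset (Function.support_add _ _)⟩
  smul_mem' c T hT := by
    have hsmul : columnEntry (c • T) = c • columnEntry T := by
      ext; rfl
    rw [Set.mem_ofPred_eq, hsmul]
    exact ⟨fun i => E.smul_mem c (hT.1 i), hT.2.subset (Function.support_const_smul_subset _ _)⟩

theorem mem_strongClosure_finiteColumns {E : Submodule 𝕜 (X →L[𝕜] Y)}
    {T : X →L[𝕜] lp (fun _ : ι => Y) 2} (hT : ∀ i, columnEntry T i ∈ strongClosure E) :
    T ∈ strongClosure (finiteColumns ι E) := by
  classical
  let single (i : ι) := lp.singleContinuousLinearMap 𝕜 (fun _ : ι => Y) 2 i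
  have hsingle (i : ι) : single i ∘L columnEntry T i ∈ strongClosure (finiteColumns ι E) := by
    refine comp_mem_strongClosure (single i) (fun S hS => le_strongClosure ?_) (hT i)
    refine ⟨fun j => ?_, ?_⟩ <;> rw [columnEntry_single_comp]
    · rcases eq_or_ne j i with rfl | hj
      · rwa [Pi.single_eq_same]
      · simp [hj]
    · exact (Set.finite_singleton i).subset Pi.support_single_subset
  refine mem_strongClosure_of_tendsto (l := atTop)
    (S := fun s : Finset ι => ∑ i ∈ s, single i ∘L columnEntry T i)
    (fun s => Submodule.sum_mem _ fun i _ => hsingle i) fun v => ?_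
  have hTv : HasSum (fun i => lp.single 2 i (T v i)) (T v) :=
    lp.hasSum_single ENNReal.ofNat_ne_top (T v)
  simpa [single, columnEntry_apply, HasSum] using hTv

end Columns

section ColumnGram

variable {ι X Y : Type*}
  [NormedAddCommGroup X] [InnerProductSpace ℂ X] [CompleteSpace X]
  [NormedAddCommGroup Y] [InnerProductSpace ℂ Y] [CompleteSpace Y]

theorem adjoint_comp_eq_of_hasSum {S T : X →L[ℂ] lp (fun _ : ι => Y) 2} {s : X →L[ℂ] X}
    (h : HasSum (fun i => (columnEntry S i)† ∘L columnEntry T i) s) : S† ∘L T = s := by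
  ext v
  refine ext_inner_left ℂ fun u => ?_
  have hinner : HasSum (fun i => ⟪u, ((columnEntry S i)†) (columnEntry T i v)⟫_ℂ) ⟪u, s v⟫_ℂ :=
    h.mapL (innerSL ℂ u ∘L ContinuousLinearMap.apply ℂ X v)
  simp only [adjoint_inner_right] at hinner
  rw [comp_apply, adjoint_inner_right]
  exact (lp.hasSum_inner (S u) (T v)).unique hinner

theorem isTernaryRing_finiteColumns {E : Submodule ℂ (X →L[ℂ] Y)} (hE : IsTernaryRing E) :
    IsTernaryRing (finiteColumns ι E) := by
  intro a ha b hb c hc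
  have hbc : b† ∘L c = ∑ j ∈ hc.2.toFinset, (columnEntry b j)† ∘L columnEntry c j := by
    refine adjoint_comp_eq_of_hasSum (hasSum_sum_of_ne_finset_zero fun j hj => ?_)
    rw [Set.Finite.mem_toFinset, Function.notMem_support] at hj
    rw [hj, comp_zero]
  have hentry (i : ι) : columnEntry (a ∘L b† ∘L c) i =
      ∑ j ∈ hc.2.toFinset, columnEntry a i ∘L (columnEntry b j)† ∘L columnEntry c j := by
    rw [hbc]
    ext v
    simp [columnEntry]
  constructor
  · intro i
    rw [hentry]
    exact E.sum_mem fun j _ => hE _ (ha.1 i) _ (hb.1 j) _ (hc.1 j)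
  · refine ha.2.subset (Function.support_subset_iff'.2 fun i hi => ?_)
    rw [hentry, Function.notMem_support.1 hi]
    simp

theorem exists_columnEntry_eq {b : ι → X →L[ℂ] Y} (hb : Summable fun i => (b i)† ∘L b i) :
    ∃ T : X →L[ℂ] lp (fun _ : ι => Y) 2, columnEntry T = b := by
  obtain ⟨s, hs⟩ := hb
  have hsum (v : X) : HasSum (fun i => ‖b i v‖ ^ 2) (RCLike.re ⟪v, s v⟫_ℂ) := by
    have h : HasSum (fun i => ⟪v, ((b i)†) (b i v)⟫_ℂ) ⟪v, s v⟫_ℂ :=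
      hs.mapL (innerSL ℂ v ∘L ContinuousLinearMap.apply ℂ X v)
    simpa [adjoint_inner_right, inner_self_eq_norm_sq_to_K, ← Complex.ofReal_pow] using
      h.mapL Complex.reCLM
  have hmem (v : X) : Memℓp (fun i => b i v) 2 :=
    memℓp_gen (by simpa using (hsum v).summable)
  let L : X →ₗ[ℂ] lp (fun _ : ι => Y) 2 :=
    { toFun v := ⟨fun i => b i v, hmem v⟩
      map_add' u v := by ext; exact map_add _ u v
      map_smul' c v := by ext; exact map_smul _ c v }
  refine ⟨L.mkContinuous √‖s‖ fun v => ?_, rfl⟩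
  have hsq : ‖L v‖ ^ 2 = RCLike.re ⟪v, s v⟫_ℂ := by
    have h := lp.norm_rpow_eq_tsum (p := 2) (by norm_num) (L v)
    simp only [ENNReal.toReal_ofNat, Real.rpow_two] at h
    exact h.trans (hsum v).tsum_eq
  refine abs_le_of_sq_le_sq' ?_ (by positivity) |>.2
  rw [hsq, mul_pow, Real.sq_sqrt (norm_nonneg s)]
  calc RCLike.re ⟪v, s v⟫_ℂ ≤ ‖v‖ * ‖s v‖ := re_inner_le_norm v (s v)
    _ ≤ ‖v‖ * (‖s‖ * ‖v‖) := by gcongr; exact s.le_opNorm v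
    _ = ‖s‖ * ‖v‖ ^ 2 := by ring

end ColumnGram

theorem isTernaryRing_toSubmodule {X : Type*} [NormedAddCommGroup X] [InnerProductSpace ℂ X]
    [CompleteSpace X] (A : NonUnitalStarSubalgebra ℂ (X →L[ℂ] X)) : IsTernaryRing A.toSubmodule :=
  fun _ ha _ hb _ hc => A.mul_mem ha (A.mul_mem (A.star_mem' hb) hc)

theorem kaplansky_density_standard_module_general {ι X Y : Type*}
    [NormedAddCommGroup X] [InnerProductSpace ℂ X] [CompleteSpace X]
    [NormedAddCommGroup Y] [InnerProductSpace ℂ Y] [CompleteSpace Y]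
    {E : Submodule ℂ (X →L[ℂ] Y)} (hE : IsTernaryRing E) (b : ι → X →L[ℂ] Y)
    (hb : ∀ i, b i ∈ strongClosure E) (hsum : Summable fun i => (b i)† ∘L b i) :
    ∀ ε : ℝ, 0 < ε → ∀ V : Finset X, ∃ x : ι → X →L[ℂ] Y,
      (∀ i, x i ∈ E) ∧
      (Summable fun i => (x i)† ∘L x i) ∧
      ‖∑' i, (x i)† ∘L x i‖ ≤ ‖∑' i, (b i)† ∘L b i‖ ∧
      (Summable fun i => (b i - x i)† ∘L (b i - x i)) ∧
      ∀ v ∈ V, ‖(∑' i, (b i - x i)† ∘L (b i - x i)) v‖ < ε := by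
  intro ε hε V
  have hsum_eq {a : ι → X →L[ℂ] Y} {S : X →L[ℂ] lp (fun _ : ι => Y) 2} (hS : columnEntry S = a)
      (ha : Summable fun i => (a i)† ∘L a i) : ∑' i, (a i)† ∘L a i = S† ∘L S :=
    (adjoint_comp_eq_of_hasSum (hS ▸ ha.hasSum)).symm
  obtain ⟨T, hT⟩ := exists_columnEntry_eq hsum
  obtain ⟨S, ⟨hSE, hST⟩, hSV⟩ := coe_mem_closure_image_coe_iff_forall_finset.1
    ((isTernaryRing_finiteColumns hE).coe_mem_closure_image_closedBall_norm
      (mem_strongClosure_finiteColumns fun i => hT ▸ hb i))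
    (ε / (2 * ‖T‖ + 1)) (by positivity) V
  rw [mem_closedBall_zero_iff] at hST
  have hx_sum : Summable fun i => (columnEntry S i)† ∘L columnEntry S i := by
    refine summable_of_hasFiniteSupport (hSE.2.subset (Function.support_subset_iff'.2 ?_))
    intro i hi
    rw [Function.notMem_support.1 hi, comp_zero]
  have hsub_sum : Summable fun i =>
      (b i - columnEntry S i)† ∘L (b i - columnEntry S i) := by
    refine (summable_congr_cofinite ?_).2 hsum
    filter_upwards [hSE.2.compl_mem_cofinite] with i hi
    rw [Function.notMem_support.1 hi, sub_zero]
  refine ⟨columnEntry S, hSE.1, hx_sum, ?_, hsub_sum, fun v hv => ?_⟩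
  · rw [hsum_eq rfl hx_sum, hsum_eq hT hsum, norm_adjoint_comp_self, norm_adjoint_comp_self]
    gcongr
  · rw [hsum_eq (S := T - S) (by rw [← hT]; rfl) hsub_sum]
    calc ‖((T - S)† ∘L (T - S)) v‖ ≤ ‖(T - S)†‖ * ‖T v - S v‖ :=
          ((T - S)†).le_opNorm ((T - S) v)
      _ ≤ (2 * ‖T‖ + 1) * ‖T v - S v‖ := by
          rw [LinearIsometryEquiv.norm_map]
          gcongr
          linarith [norm_sub_le T S]
      _ < ε := (lt_div_iff₀' (by positivity)).1 (hSV v hv)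

/-- Kaplansky-type density for `H_A` in `H_A • M`: let `A` be a C*-subalgebra
of `B(X)` whose strong operator closure `M` contains `id_X`.  An element `ξ = {bₙ}` of the
unit ball of `H_A • M` is a sequence of operators, each in the norm closure of `A·M`
(`M` described by strong-operator approximation by elements of `A`), with
`Σ bₖ*bₖ` norm-convergent of norm at most `1`.  Then for every `ε > 0` and finite `V ⊆ X`
there is `x ∈ H_A` (a sequence in `A` with `Σ xₖ*xₖ` norm-convergent) with `‖x‖ ≤ ‖ξ‖` and
`‖⟨ξ − x, ξ − x⟩(v)‖ < ε` for all `v ∈ V`. -/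
theorem kaplansky_density_standard_module
    {X : Type*} [NormedAddCommGroup X] [InnerProductSpace ℂ X] [CompleteSpace X]
    (A : StarSubalgebra ℂ (X →L[ℂ] X))
    (hA1 : ∀ ε : ℝ, 0 < ε → ∀ V : Finset X, ∃ a ∈ A, ∀ v ∈ V, ‖v - a v‖ < ε)
    (b : ℕ → (X →L[ℂ] X))
    (hmem : ∀ n, b n ∈ closure {c : X →L[ℂ] X | ∃ a ∈ A, ∃ m : X →L[ℂ] X,
      (∀ ε : ℝ, 0 < ε → ∀ V : Finset X, ∃ a' ∈ A, ∀ v ∈ V, ‖m v - a' v‖ < ε) ∧ c = a * m})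
    (hsum : Summable fun k => star (b k) * b k)
    (hnorm : ‖∑' k, star (b k) * b k‖ ≤ 1) :
    ∀ ε : ℝ, 0 < ε → ∀ V : Finset X, ∃ x : ℕ → (X →L[ℂ] X),
      (∀ n, x n ∈ A) ∧
      (Summable fun k => star (x k) * x k) ∧
      ‖∑' k, star (x k) * x k‖ ≤ ‖∑' k, star (b k) * b k‖ ∧
      (Summable fun k => star (b k - x k) * (b k - x k)) ∧
      ∀ v ∈ V, ‖(∑' k, star (b k - x k) * (b k - x k)) v‖ < ε := by
  refine kaplansky_density_standard_module_general
    (isTernaryRing_toSubmodule A.toNonUnitalStarSubalgebra) b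
    (fun n => closure_mul_strongClosure_subset _ (closure_mono ?_ (hmem n))) hsum
  exact fun _ ⟨a, ha, m, hm, hc⟩ => ⟨a, ha, m, mem_strongClosure_iff_forall_finset.2 hm, hc.symm⟩
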